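/- Let h, θ, η, w : ℕ → ℝ be real sequences satisfying, for every t > T, the CFN component recurrence h(t) = θ(t) · tanh(h(t−1)) + η(t) · tanh(w(t)), and suppose w(t) = 0 for all t > T while 0 ≤ θ(t) ≤ Θ with Θ < 1 for all t > T. Then |h(T+k)| ≤ Θ^k · |h(T)| for every k ≥ 0; in particular h(t) → 0 as t → ∞. -/

import Mathlib

/-!
The real hyperbolic tangent has derivative `1 / cosh² ≤ 1` and fixes `0`, so it never increases
absolute values. Once the input vanishes, each update therefore multiplies the size of the hidden
state by at most the bound `Θ` on the forget gate, and iterating gives geometric decay. Only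
submultiplicativity of the norm enters, so the same argument covers the whole hidden vector: the
Hadamard product is multiplication in the ring `ι → ℝ` with the sup norm.
-/

open Filter Topology

theorem hasDerivAt_tanh (x : ℝ) : HasDerivAt Real.tanh (1 / Real.cosh x ^ 2) x := by
  have hquot := (Real.hasDerivAt_sinh x).div (Real.hasDerivAt_cosh x) (Real.cosh_pos x).ne'
  rw [← sq, ← sq, Real.cosh_sq_sub_sinh_sq] at hquot
  exact hquot.congr_of_eventuallyEq (.of_forall Real.tanh_eq_sinh_div_cosh)

theorem lipschitzWith_one_tanh : LipschitzWith 1 Real.tanh := by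
  refine lipschitzWith_of_nnnorm_deriv_le (fun x ↦ (hasDerivAt_tanh x).differentiableAt) fun x ↦ ?_
  have hcosh : 1 ≤ Real.cosh x ^ 2 := one_le_pow₀ (Real.one_le_cosh x)
  rw [(hasDerivAt_tanh x).deriv, ← NNReal.coe_le_coe, coe_nnnorm, NNReal.coe_one,
    Real.norm_of_nonneg (by positivity)]
  exact div_le_one_of_le₀ hcosh (by positivity)

theorem abs_tanh_le_abs (x : ℝ) : |Real.tanh x| ≤ |x| := by
  simpa using lipschitzWith_one_tanh.norm_le_mul Real.tanh_zero x

theorem tendsto_zero_of_ratio_norm_eventually_le {E : Type*} [SeminormedAddCommGroup E]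
    {u : ℕ → E} {c : ℝ} (hc : c < 1) (hu : ∀ᶠ n in atTop, ‖u (n + 1)‖ ≤ c * ‖u n‖) :
    Tendsto u atTop (𝓝 0) := by
  have hsum : Summable (fun n ↦ ‖u n‖) :=
    summable_of_ratio_norm_eventually_le hc (by simpa only [norm_norm] using hu)
  exact tendsto_zero_iff_norm_tendsto_zero.2 hsum.tendsto_atTop_zero

section GatedRecurrence

variable {R : Type*} [NonUnitalSeminormedRing R] {φ : R → R}

theorem norm_mul_map_add_mul_map_zero_le (hφ : ∀ x, ‖φ x‖ ≤ ‖x‖) (a b x : R) :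
    ‖a * φ x + b * φ 0‖ ≤ ‖a‖ * ‖x‖ :=
  calc ‖a * φ x + b * φ 0‖
      ≤ ‖a‖ * ‖φ x‖ + ‖b‖ * ‖φ 0‖ := norm_add_le_of_le (norm_mul_le _ _) (norm_mul_le _ _)
    _ ≤ ‖a‖ * ‖x‖ + ‖b‖ * ‖(0 : R)‖ := by gcongr <;> exact hφ _
    _ = ‖a‖ * ‖x‖ := by rw [norm_zero, mul_zero, add_zero]

theorem cfn_relaxation_to_zero_general (hφ : ∀ x, ‖φ x‖ ≤ ‖x‖) (T : ℕ) (h θ η w : ℕ → R) (Θ : ℝ)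
    (hrec : ∀ t, T < t → h t = θ t * φ (h (t - 1)) + η t * φ (w t))
    (hw : ∀ t, T < t → w t = 0)
    (hθ : ∀ t, T < t → ‖θ t‖ ≤ Θ)
    (hΘ1 : Θ < 1) :
    (∀ k : ℕ, ‖h (T + k)‖ ≤ Θ ^ k * ‖h T‖) ∧ Tendsto h atTop (𝓝 0) := by
  have hstep : ∀ n ≥ T, ‖h (n + 1)‖ ≤ Θ * ‖h n‖ := fun n hn ↦ by
    have hlt : T < n + 1 := Nat.lt_succ_of_le hn
    rw [hrec _ hlt, hw _ hlt, Nat.add_sub_cancel]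
    exact (norm_mul_map_add_mul_map_zero_le hφ _ _ _).trans (by gcongr; exact hθ _ hlt)
  have hΘ0 : 0 ≤ Θ := (norm_nonneg _).trans (hθ (T + 1) T.lt_succ_self)
  exact ⟨fun k ↦ le_geom (u := fun k ↦ ‖h (T + k)‖) hΘ0 k fun j _ ↦ hstep _ (T.le_add_right j),
    tendsto_zero_of_ratio_norm_eventually_le hΘ1 (eventually_atTop.2 ⟨T, hstep⟩)⟩

end GatedRecurrence

/-- Once the embedded input feature vanishes (for `t > T`), the CFN hidden
component relaxes geometrically to zero: `|h (T+k)| ≤ Θ^k * |h T|` for every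
`k ≥ 0`, and in particular `h t → 0` as `t → ∞`. -/
theorem cfn_relaxation_to_zero (T : ℕ) (h θ η w : ℕ → ℝ) (Θ : ℝ)
    (hrec : ∀ t, T < t →
      h t = θ t * Real.tanh (h (t - 1)) + η t * Real.tanh (w t))
    (hw : ∀ t, T < t → w t = 0)
    (hθ : ∀ t, T < t → 0 ≤ θ t ∧ θ t ≤ Θ)
    (hΘ1 : Θ < 1) :
    (∀ k : ℕ, |h (T + k)| ≤ Θ ^ k * |h T|) ∧
      Filter.Tendsto h Filter.atTop (nhds 0) :=
  cfn_relaxation_to_zero_general abs_tanh_le_abs T h θ η w Θ hrec hw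
    (fun t ht ↦ (Real.norm_of_nonneg (hθ t ht).1).trans_le (hθ t ht).2) hΘ1
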